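/- arXiv:2605.00010 — 2 statements merged into one kernel-verified Lean document; each statement's English description precedes it below -/
import Mathlib

section
/- Shortcut Rule safety (Reduction Rule 3): Let G be a time-expanded network and let e = (u,v) be an arc of G with dist(u,v) < w(e). Then no feasible trajectory P with val(P) = val(G) uses e; consequently val(G − e) = val(G), where G − e is G with the arc e deleted. -/
/-!
If a path `p` uses the arc `(u, v)`, write `p = l₁ ++ u :: v :: l₂`. Since
`dist u v < w u v`, some path `u :: r ++ [v]` is strictly cheaper than the arc, and
`l₁ ++ u :: r ++ v :: l₂` is again a path with the same endpoints, visits every vertex of `p`, and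
has strictly smaller value (`TEN.exists_cheaper`). Hence a minimal feasible trajectory never uses
`(u, v)`. A minimal trajectory of `G` is therefore a trajectory of `G'`, while every trajectory of
`G'` is one of `G` with the same value, so the two minima agree.
-/


/-- A time-expanded network over bodies `A` and time grid `T`:
a directed graph on `A × T` whose arcs strictly increase the time coordinate,
with nonnegative arc weights. -/
structure TEN (A T : Type) [LinearOrder T] where
  E : (A × T) → (A × T) → Prop
  w : (A × T) → (A × T) → ℝ
  time_lt : ∀ u v, E u v → u.2 < v.2
  w_nonneg : ∀ u v, E u v → 0 ≤ w u v

namespace TEN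

variable {A T : Type} [LinearOrder T]

/-- A directed path (given as its list of vertices) from `u` to `v` in `G`. -/
def IsPathFrom (G : TEN A T) (u v : A × T) (p : List (A × T)) : Prop :=
  p.Chain' (fun a b => G.E a b) ∧ p.head? = some u ∧ p.getLast? = some v

/-- The value of a trajectory: the sum of the weights of its arcs. -/
def val (G : TEN A T) (p : List (A × T)) : ℝ :=
  ((p.zip p.tail).map fun e => G.w e.1 e.2).sum

/-- A feasible trajectory: a directed path from `(αs, t0)` to `(αs, tmax)` that
visits every body at least once. -/
def Feasible (G : TEN A T) (as : A) (t0 tmax : T) (p : List (A × T)) : Prop :=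
  G.IsPathFrom (as, t0) (as, tmax) p ∧ ∀ a : A, ∃ t : T, (a, t) ∈ p

/-- The trajectory `p` uses the arc `(u, v)`. -/
def Uses (p : List (A × T)) (u v : A × T) : Prop :=
  (u, v) ∈ p.zip p.tail

/-- Minimum total weight of a directed path from `u` to `v` (`⊤` if none exists). -/
noncomputable def dist (G : TEN A T) (u v : A × T) : EReal :=
  sInf {x : EReal | ∃ p, G.IsPathFrom u v p ∧ x = (G.val p : EReal)}

end TEN

namespace TEN

variable {A T : Type} [LinearOrder T]

theorem val_cons_cons (G : TEN A T) (x y : A × T) (l : List (A × T)) :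
    G.val (x :: y :: l) = G.w x y + G.val (y :: l) := by
  simp [val]

/-- The value is additive when a path is cut at one of its vertices. -/
theorem val_split (G : TEN A T) (l₁ l₂ : List (A × T)) (a : A × T) :
    G.val (l₁ ++ a :: l₂) = G.val (l₁ ++ [a]) + G.val (a :: l₂) := by
  induction l₁ with
  | nil => simp [val]
  | cons x l ih =>
    cases l with
    | nil => simp [val]
    | cons y l =>
      simp only [List.cons_append, val_cons_cons] at ih ⊢
      rw [ih]; ring

theorem uses_split {p : List (A × T)} {u v : A × T} (h : Uses p u v) :
    ∃ l₁ l₂, p = l₁ ++ u :: v :: l₂ := by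
  unfold Uses at h
  induction p with
  | nil => simp at h
  | cons x p ih =>
    cases p with
    | nil => simp at h
    | cons y p =>
      simp only [List.tail_cons, List.zip_cons_cons, List.mem_cons, Prod.mk.injEq] at h
      rcases h with ⟨rfl, rfl⟩ | h
      · exact ⟨[], p, rfl⟩
      · obtain ⟨l₁, l₂, e⟩ := ih h
        exact ⟨x :: l₁, l₂, by rw [e]; rfl⟩

theorem isChain_of_not_uses {R S : A × T → A × T → Prop} {u v : A × T}
    (hRS : ∀ x y, R x y → (x, y) ≠ (u, v) → S x y) {p : List (A × T)}
    (h : p.IsChain R) (hu : ¬ Uses p u v) : p.IsChain S := by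
  unfold Uses at hu
  induction p with
  | nil => simp
  | cons x p ih =>
    cases p with
    | nil => simp
    | cons y p =>
      simp only [List.tail_cons, List.zip_cons_cons, List.mem_cons, not_or] at hu
      rw [List.isChain_cons_cons] at h ⊢
      exact ⟨hRS x y h.1 (Ne.symm hu.1), ih h.2 hu.2⟩

/-- A feasible trajectory through an arc that is longer than the distance of its endpoints can be
rerouted to a strictly cheaper feasible trajectory. -/
theorem exists_cheaper (G : TEN A T) {as : A} {t0 tmax : T} {u v : A × T} (he : G.E u v)
    (hshort : G.dist u v < (G.w u v : EReal)) {p : List (A × T)}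
    (hp : G.Feasible as t0 tmax p) (hu : Uses p u v) :
    ∃ p', G.Feasible as t0 tmax p' ∧ G.val p' < G.val p := by
  obtain ⟨_, ⟨q, ⟨hqc, hqh, hql⟩, rfl⟩, hlt⟩ := sInf_lt_iff.1 hshort
  have hlt : G.val q < G.w u v := EReal.coe_lt_coe_iff.1 hlt
  obtain ⟨l₁, l₂, rfl⟩ := uses_split hu
  obtain ⟨⟨hc, hh, hl⟩, hvis⟩ := hp
  -- Arcs increase time, so `u ≠ v` and the cheap path has at least two vertices.
  have huv : u ≠ v := fun h => (G.time_lt u v he).ne (congrArg Prod.snd h)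
  obtain ⟨r, rfl⟩ : ∃ r, q = u :: (r ++ [v]) := by
    obtain ⟨s, rfl⟩ := List.getLast?_eq_some_iff.1 hql
    cases s with
    | nil => simp at hqh; exact absurd hqh.symm huv
    | cons x s => simp at hqh; subst hqh; exact ⟨s, rfl⟩
  change List.IsChain _ _ at hc hqc
  refine ⟨l₁ ++ u :: (r ++ v :: l₂), ⟨⟨?_, ?_, ?_⟩, ?_⟩, ?_⟩
  · change List.IsChain _ _
    rw [List.isChain_split] at hc ⊢
    refine ⟨hc.1, ?_⟩
    rw [← List.cons_append, List.isChain_split]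
    exact ⟨hqc, (List.isChain_cons_cons.1 hc.2).2⟩
  · cases l₁ <;> simpa using hh
  · simpa [List.getLast?_append, List.getLast?_cons] using hl
  · intro a
    obtain ⟨t, ht⟩ := hvis a
    refine ⟨t, ?_⟩
    simp only [List.mem_append, List.mem_cons] at ht ⊢
    tauto
  · have h₁ := G.val_split l₁ (v :: l₂) u
    have h₂ := G.val_split l₁ (r ++ v :: l₂) u
    have h₃ := G.val_split (u :: r) l₂ v
    have h₄ := G.val_cons_cons u v l₂
    simp only [List.cons_append] at h₃
    linarith

end TEN

/-- **Shortcut Rule safety.** If `e = (u,v)` is an arc with `dist(u,v) < w(e)`, then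
no optimal feasible trajectory uses `e`, and deleting `e` preserves the optimal value. -/
theorem shortcut_rule_safe {A T : Type} [Fintype A] [Fintype T] [LinearOrder T]
    (G G' : TEN A T) (as : A) (t0 tmax : T)
    (ht0 : ∀ t : T, t0 ≤ t) (htmax : ∀ t : T, t ≤ tmax)
    (vG : ℝ)
    (hvG : IsLeast {x : ℝ | ∃ p, G.Feasible as t0 tmax p ∧ G.val p = x} vG)
    (u v : A × T) (he : G.E u v)
    (hshort : G.dist u v < (G.w u v : EReal))
    (hE : ∀ x y : A × T, G'.E x y ↔ G.E x y ∧ (x, y) ≠ (u, v))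
    (hw : G'.w = G.w) :
    (∀ p, G.Feasible as t0 tmax p → G.val p = vG → ¬ TEN.Uses p u v) ∧
    IsLeast {x : ℝ | ∃ p, G'.Feasible as t0 tmax p ∧ G'.val p = x} vG := by
  have hno : ∀ p, G.Feasible as t0 tmax p → G.val p = vG → ¬ TEN.Uses p u v := by
    intro p hp hv hu
    obtain ⟨p', hp', hlt⟩ := G.exists_cheaper he hshort hp hu
    have := hvG.2 ⟨p', hp', rfl⟩
    linarith
  have hval : ∀ p, G'.val p = G.val p := fun p => by simp only [TEN.val, hw]
  refine ⟨hno, ?_, ?_⟩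
  · obtain ⟨p, hp, hv⟩ := hvG.1
    refine ⟨p, ⟨⟨?_, hp.1.2⟩, hp.2⟩, (hval p).trans hv⟩
    exact TEN.isChain_of_not_uses (fun x y h hne => (hE x y).2 ⟨h, hne⟩) hp.1.1 (hno p hp hv)
  · rintro _ ⟨p, hp, rfl⟩
    refine hvG.2 ⟨p, ⟨⟨?_, hp.1.2⟩, hp.2⟩, (hval p).symm⟩
    exact List.IsChain.imp (fun x y h => ((hE x y).1 h).1) hp.1.1
end

section
/- DDD optimality certificate: Let G be a time-expanded network and, for each body α, let Λ(α) be a partition of 𝒯, giving the time-interval network I. Let L denote the minimum total weight of a directed walk in I from (α_s,λ_0) to (α_s,λ_max) — where λ_0 ∈ Λ(α_s) contains t_0 and λ_max ∈ Λ(α_s) contains t_max — that contains, for every body α ∈ Α, a vertex of the form (α,λ). If P is a feasible trajectory in G with val(P) ≤ L, then val(P) = val(G), i.e., P is an optimal trajectory. -/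
namespace TEN

variable {A T : Type} [LinearOrder T]

/-- `Λ` assigns to every body a partition of the time grid: every time point lies
in exactly one part. -/
def IsTimePartition (L : A → Set (Set T)) : Prop :=
  ∀ (a : A) (t : T), ∃! lam : Set T, lam ∈ L a ∧ t ∈ lam

/-- Arc of the time-interval network `I`: two distinct interval-vertices are
connected whenever some pair of represented time points is connected in `G`. -/
def IArc (G : TEN A T) (L : A → Set (Set T)) (u v : A × Set T) : Prop :=
  u.2 ∈ L u.1 ∧ v.2 ∈ L v.1 ∧ u ≠ v ∧
    ∃ t ∈ u.2, ∃ t' ∈ v.2, G.E (u.1, t) (v.1, t')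

/-- Weight of an arc of the time-interval network: the minimum weight of a
transfer between represented time points. -/
noncomputable def iw (G : TEN A T) (u v : A × Set T) : ℝ :=
  sInf {x : ℝ | ∃ t ∈ u.2, ∃ t' ∈ v.2, G.E (u.1, t) (v.1, t') ∧ x = G.w (u.1, t) (v.1, t')}

/-- Total weight of a walk in the time-interval network. -/
noncomputable def ival (G : TEN A T) (W : List (A × Set T)) : ℝ :=
  ((W.zip W.tail).map fun e => G.iw e.1 e.2).sum

/-- A directed walk in the time-interval network from `(αs, λ0)` to `(αs, λmax)`
that contains, for every body, a vertex of that body. -/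
def IFeasibleWalk (G : TEN A T) (L : A → Set (Set T)) (as : A)
    (lam0 lamMax : Set T) (W : List (A × Set T)) : Prop :=
  W.Chain' (fun u v => G.IArc L u v) ∧ W.head? = some (as, lam0) ∧
    W.getLast? = some (as, lamMax) ∧ ∀ a : A, ∃ lam : Set T, (a, lam) ∈ W

end TEN

namespace TEN

variable {A T : Type} [LinearOrder T]

lemma iw_le (G : TEN A T) {u v : A × Set T} {t t' : T} (ht : t ∈ u.2) (ht' : t' ∈ v.2)
    (h : G.E (u.1, t) (v.1, t')) : G.iw u v ≤ G.w (u.1, t) (v.1, t') := by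
  -- In `ℝ` the infimum is a lower bound only because the weights are bounded below by `0`.
  refine csInf_le ⟨0, ?_⟩ ⟨t, ht, t', ht', h, rfl⟩
  rintro x ⟨s, -, s', -, hs, rfl⟩
  exact G.w_nonneg _ _ hs

/-- The vertex `(a, λ)` of the time-interval network representing `(a, t)`, where `λ` is the
part of `Λ(a)` containing `t`. -/
noncomputable def proj (L : A → Set (Set T)) (hL : IsTimePartition L) (u : A × T) : A × Set T :=
  (u.1, (hL u.1 u.2).choose)

lemma proj_mem (L : A → Set (Set T)) (hL : IsTimePartition L) (u : A × T) :
    (proj L hL u).2 ∈ L u.1 ∧ u.2 ∈ (proj L hL u).2 :=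
  (hL u.1 u.2).choose_spec.1

lemma proj_eq (L : A → Set (Set T)) (hL : IsTimePartition L) {a : A} {t : T} {lam : Set T}
    (h : lam ∈ L a) (ht : t ∈ lam) : proj L hL (a, t) = (a, lam) :=
  Prod.ext rfl ((hL a t).unique (proj_mem L hL (a, t)) ⟨h, ht⟩)

/-- The walk obtained by projecting a path of `G` and merging consecutive equal vertices,
written as head and tail. -/
lemma exists_walk_of_chain (G : TEN A T) (L : A → Set (Set T)) (hL : IsTimePartition L)
    (u : A × T) (q : List (A × T)) (hq : List.IsChain (fun a b => G.E a b) (u :: q)) :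
    ∃ W : List (A × Set T),
      List.IsChain (fun a b => G.IArc L a b) (proj L hL u :: W) ∧
      (proj L hL u :: W).getLast? = (u :: q).getLast?.map (proj L hL) ∧
      (∀ x ∈ u :: q, proj L hL x ∈ proj L hL u :: W) ∧
      G.ival (proj L hL u :: W) ≤ G.val (u :: q) := by
  induction q generalizing u with
  | nil => exact ⟨[], by simp, by simp, by simp, by simp [ival, val]⟩
  | cons v q ih =>
    rw [List.isChain_cons_cons] at hq
    obtain ⟨huv, hq⟩ := hq
    obtain ⟨W, hW, hlast, hmem, hval⟩ := ih v hq
    have hv : G.val (u :: v :: q) = G.w u v + G.val (v :: q) := by simp [val]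
    by_cases he : proj L hL u = proj L hL v
    · have h0 := G.w_nonneg u v huv
      refine ⟨W, he ▸ hW, ?_, ?_, ?_⟩
      · rw [he, hlast, List.getLast?_cons_cons]
      · rintro x hx
        rcases List.mem_cons.1 hx with rfl | hx
        · exact List.mem_cons_self
        · exact he ▸ hmem x hx
      · rw [he, hv]; linarith
    · have hu := proj_mem L hL u
      have hv' := proj_mem L hL v
      have hw : G.iw (proj L hL u) (proj L hL v) ≤ G.w u v := G.iw_le hu.2 hv'.2 huv
      refine ⟨proj L hL v :: W, List.isChain_cons_cons.2
        ⟨⟨hu.1, hv'.1, he, u.2, hu.2, v.2, hv'.2, huv⟩, hW⟩, ?_, ?_, ?_⟩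
      · rw [List.getLast?_cons_cons, hlast, List.getLast?_cons_cons]
      · rintro x hx
        rcases List.mem_cons.1 hx with rfl | hx
        · exact List.mem_cons_self
        · exact List.mem_cons_of_mem _ (hmem x hx)
      · have hi : G.ival (proj L hL u :: proj L hL v :: W)
            = G.iw (proj L hL u) (proj L hL v) + G.ival (proj L hL v :: W) := by simp [ival]
        rw [hi, hv]; linarith

end TEN

/-- **DDD optimality certificate.** Let `L0` be the minimum total weight of a walk
in the time-interval network from `(αs, λ0)` to `(αs, λmax)` that visits every
body. If `P` is a feasible trajectory of `G` with `val P ≤ L0`, then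
`val P = val G`, i.e. `P` is optimal. -/
theorem ddd_optimality_certificate {A T : Type} [Fintype A] [Fintype T] [LinearOrder T]
    (G : TEN A T) (L : A → Set (Set T)) (hL : TEN.IsTimePartition L)
    (as : A) (t0 tmax : T)
    (ht0 : ∀ t : T, t0 ≤ t) (htmax : ∀ t : T, t ≤ tmax)
    (lam0 lamMax : Set T)
    (hlam0 : lam0 ∈ L as) (ht0mem : t0 ∈ lam0)
    (hlamMax : lamMax ∈ L as) (htmaxmem : tmax ∈ lamMax)
    (L0 : ℝ)
    (hL0 : IsLeast {x : ℝ | ∃ W, G.IFeasibleWalk L as lam0 lamMax W ∧ G.ival W = x} L0)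
    (p : List (A × T)) (hp : G.Feasible as t0 tmax p) (hle : G.val p ≤ L0) :
    IsLeast {x : ℝ | ∃ q, G.Feasible as t0 tmax q ∧ G.val q = x} (G.val p) := by
  refine ⟨⟨p, hp, rfl⟩, ?_⟩
  rintro x ⟨q, ⟨⟨hchain, hhead, hlast⟩, hvis⟩, rfl⟩
  cases q with
  | nil => simp at hhead
  | cons u q =>
    obtain rfl : u = (as, t0) := by simpa using hhead
    obtain ⟨W, hW, hWlast, hmem, hval⟩ := G.exists_walk_of_chain L hL _ q hchain
    refine hle.trans ((hL0.2 ⟨_, ⟨hW, ?_, ?_, fun a => ?_⟩, rfl⟩).trans hval)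
    · rw [List.head?_cons, TEN.proj_eq L hL hlam0 ht0mem]
    · rw [hWlast, hlast, Option.map_some, TEN.proj_eq L hL hlamMax htmaxmem]
    · obtain ⟨t, ht⟩ := hvis a
      exact ⟨_, hmem _ ht⟩
end
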